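/- If (r, α, κ) ∈ C_TA(p_{Y|X}, p_{Z|X}), then (r − β, α + β, κ + 2β) ∈ C_TA(p_{Y|X}, p_{Z|X}) for every nonnegative real number β < r. -/

import Mathlib

open scoped BigOperators Classical

noncomputable section

/-- A stochastic map (conditional probability distribution): for each `b`,
`p b ∈ P(A)` is a probability mass function on `A`. -/
def IsStochastic {B A : Type*} [Fintype A] (p : B → A → ℝ) : Prop :=
  (∀ b a, 0 ≤ p b a) ∧ ∀ b, ∑ a, p b a = 1

/-- The blocklength-`n` memoryless extension of a channel, acting componentwise. -/
def memExt {X Y : Type*} (W : X → Y → ℝ) (n : ℕ) : (Fin n → X) → (Fin n → Y) → ℝ :=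
  fun x y => ∏ i, W (x i) (y i)

/-- Shannon entropy (base 2) of a finitely supported pmf. -/
def ent {A : Type*} [Fintype A] (p : A → ℝ) : ℝ := -∑ a, p a * Real.logb 2 (p a)

variable {𝒳 𝒴 𝒵 : Type} [Fintype 𝒳] [Fintype 𝒴] [Fintype 𝒵]

/-- The joint pmf of (channel output, message, key) induced by a code:
the message `M` and the key `K` are independent and uniform, `Xⁿ ∼ f(·|M,K)`,
and the output is obtained through the memoryless extension of the channel `Ch`. -/
def pOut {M K 𝒪 : Type*} [Fintype M] [Fintype K] [Fintype 𝒳]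
    (Ch : 𝒳 → 𝒪 → ℝ) (n : ℕ) (f : M × K → (Fin n → 𝒳) → ℝ) :
    (Fin n → 𝒪) → M → K → ℝ :=
  fun o m k => ∑ x, ((Fintype.card M : ℝ))⁻¹ * ((Fintype.card K : ℝ))⁻¹ *
    f (m, k) x * memExt Ch n x o

/-- `(f, φ)` is an `(r, α, κ, δ, n)`-TA (typical authentication) code for the
DM-AIC`(Wc, Vc)`: the message rate `n⁻¹ log₂ |M|` is at least `r`, the key
consumption rate `n⁻¹ log₂ |K|` is at most `κ`, the probability of message error
is at most `δ`, and for every attack channel `ψ`, the probability (under the joint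
law of `(Zⁿ, M, K)`) that `−n⁻¹ log₂ ω_{f,φ}(Zⁿ,M,K) < α`, i.e. that
`ω_{f,φ}(Zⁿ,M,K) > 2^{−nα}`, is at most `δ`. -/
def IsTACode {M K : Type*} [Fintype M] [Fintype K]
    (Wc : 𝒳 → 𝒴 → ℝ) (Vc : 𝒳 → 𝒵 → ℝ) (r α κ δ : ℝ) (n : ℕ)
    (f : M × K → (Fin n → 𝒳) → ℝ)
    (φ : (Fin n → 𝒴) × K → Option M → ℝ) : Prop :=
  IsStochastic f ∧ IsStochastic φ ∧
  r ≤ Real.logb 2 (Fintype.card M) / n ∧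
  Real.logb 2 (Fintype.card K) / n ≤ κ ∧
  1 - (∑ y, ∑ m, ∑ k, pOut Wc n f y m k * φ (y, k) (some m)) ≤ δ ∧
  ∀ ψ : (Fin n → 𝒵) → (Fin n → 𝒴) → ℝ, IsStochastic ψ →
    (∑ z, ∑ m, ∑ k,
      (if (2 : ℝ) ^ (-(n : ℝ) * α) <
          ∑ y, ψ z y * ∑ m' ∈ Finset.univ.erase m, φ (y, k) (some m')
        then pOut Vc n f z m k else 0)) ≤ δ

/-- The typical authentication capacity region `C_TA(Wc, Vc)`: the set of triples
`(r, α, κ)` with `r > 0` such that for each blocklength `i ∈ ℤ⁺` there is an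
`(rᵢ, αᵢ, κᵢ, δᵢ, i)`-TA code with `(rᵢ, αᵢ, κᵢ, δᵢ) → (r, α, κ, 0)`. -/
def CTA (Wc : 𝒳 → 𝒴 → ℝ) (Vc : 𝒳 → 𝒵 → ℝ) : Set (ℝ × ℝ × ℝ) :=
  { t | 0 < t.1 ∧ ∃ rs αs κs ds : ℕ → ℝ,
      (∀ i : ℕ, 0 < i → ∃ (Mc Kc : ℕ) (f : Fin Mc × Fin Kc → (Fin i → 𝒳) → ℝ)
          (φ : (Fin i → 𝒴) × Fin Kc → Option (Fin Mc) → ℝ),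
          IsTACode Wc Vc (rs i) (αs i) (κs i) (ds i) i f φ) ∧
      Filter.Tendsto (fun i => (rs i, αs i, κs i, ds i)) Filter.atTop
        (nhds (t.1, t.2.1, t.2.2, 0)) }

/-- Conditional output law of a code given the message and the key. -/
def cP {M K 𝒪 : Type*} (Ch : 𝒳 → 𝒪 → ℝ) (n : ℕ) (f : M × K → (Fin n → 𝒳) → ℝ)
    (m : M) (k : K) (o : Fin n → 𝒪) : ℝ :=
  ∑ x, f (m, k) x * memExt Ch n x o

lemma pOut_eq {M K 𝒪 : Type*} [Fintype M] [Fintype K]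
    (Ch : 𝒳 → 𝒪 → ℝ) (n : ℕ) (f : M × K → (Fin n → 𝒳) → ℝ) (o : Fin n → 𝒪) (m : M) (k : K) :
    pOut Ch n f o m k
      = ((Fintype.card M : ℝ))⁻¹ * ((Fintype.card K : ℝ))⁻¹ * cP Ch n f m k o := by
  unfold pOut cP
  rw [Finset.mul_sum]
  exact Finset.sum_congr rfl fun x _ => by ring

lemma memExt_stoch {X Y : Type*} [Fintype Y] {W : X → Y → ℝ} (hW : IsStochastic W) (n : ℕ) :
    IsStochastic (memExt W n) := by
  refine ⟨fun x y => Finset.prod_nonneg fun i _ => hW.1 _ _, fun x => ?_⟩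
  unfold memExt
  have := Finset.prod_univ_sum (fun _ : Fin n => (Finset.univ : Finset Y))
    (fun i y => W (x i) y)
  rw [Fintype.piFinset_univ] at this
  rw [← this]
  simp [hW.2]

lemma cP_nonneg {M K 𝒪 : Type*} [Fintype 𝒪] {Ch : 𝒳 → 𝒪 → ℝ} (hC : IsStochastic Ch) {n : ℕ}
    {f : M × K → (Fin n → 𝒳) → ℝ} (hf : IsStochastic f) (m : M) (k : K) (o : Fin n → 𝒪) :
    0 ≤ cP Ch n f m k o :=
  Finset.sum_nonneg fun x _ => mul_nonneg (hf.1 _ _) ((memExt_stoch hC n).1 _ _)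

lemma cP_sum {M K 𝒪 : Type*} [Fintype 𝒪] {Ch : 𝒳 → 𝒪 → ℝ} (hC : IsStochastic Ch) {n : ℕ}
    {f : M × K → (Fin n → 𝒳) → ℝ} (hf : IsStochastic f) (m : M) (k : K) :
    ∑ o, cP Ch n f m k o = 1 := by
  unfold cP
  rw [Finset.sum_comm]
  simp_rw [← Finset.mul_sum, (memExt_stoch hC n).2, mul_one]
  exact hf.2 _

lemma cP_le_one {M K 𝒪 : Type*} [Fintype 𝒪] {Ch : 𝒳 → 𝒪 → ℝ} (hC : IsStochastic Ch) {n : ℕ}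
    {f : M × K → (Fin n → 𝒳) → ℝ} (hf : IsStochastic f) (m : M) (k : K) (o : Fin n → 𝒪) :
    cP Ch n f m k o ≤ 1 := by
  rw [← cP_sum hC hf m k]
  exact Finset.single_le_sum (f := fun o => cP Ch n f m k o)
    (fun o _ => cP_nonneg hC hf m k o) (Finset.mem_univ o)

lemma phi_le_one {B A : Type*} [Fintype A] {φ : B → A → ℝ} (h : IsStochastic φ) (b : B) (a : A) :
    φ b a ≤ 1 := by
  rw [← h.2 b]
  exact Finset.single_le_sum (f := fun a => φ b a) (fun o _ => h.1 b o) (Finset.mem_univ a)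

lemma phi_some_le_one {B A : Type*} [Fintype A] {φ : B → Option A → ℝ} (h : IsStochastic φ)
    (b : B) : ∑ a, φ b (some a) ≤ 1 := by
  have h2 := h.2 b
  rw [Fintype.sum_option] at h2
  have := h.1 b none
  linarith

/-- Success probability given the message and the key. -/
def succP {M K : Type*} (Wc : 𝒳 → 𝒴 → ℝ) (n : ℕ) (f : M × K → (Fin n → 𝒳) → ℝ)
    (φ : (Fin n → 𝒴) × K → Option M → ℝ) (m : M) (k : K) : ℝ :=
  ∑ y, cP Wc n f m k y * φ (y, k) (some m)

lemma succ_sum_eq {M K : Type*} [Fintype M] [Fintype K] (Wc : 𝒳 → 𝒴 → ℝ) (n : ℕ)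
    (f : M × K → (Fin n → 𝒳) → ℝ) (φ : (Fin n → 𝒴) × K → Option M → ℝ) :
    ∑ y, ∑ m, ∑ k, pOut Wc n f y m k * φ (y, k) (some m)
      = ((Fintype.card M : ℝ))⁻¹ * ((Fintype.card K : ℝ))⁻¹ * ∑ m, ∑ k, succP Wc n f φ m k := by
  unfold succP
  rw [Finset.sum_comm, Finset.mul_sum]
  refine Finset.sum_congr rfl fun m _ => ?_
  rw [Finset.sum_comm, Finset.mul_sum]
  refine Finset.sum_congr rfl fun k _ => ?_
  rw [Finset.mul_sum]
  refine Finset.sum_congr rfl fun y _ => ?_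
  rw [pOut_eq]; ring

lemma succP_le_one {M K : Type*} [Fintype M] {Wc : 𝒳 → 𝒴 → ℝ} (hW : IsStochastic Wc) {n : ℕ}
    {f : M × K → (Fin n → 𝒳) → ℝ} {φ : (Fin n → 𝒴) × K → Option M → ℝ}
    (hf : IsStochastic f) (hφ : IsStochastic φ) (m : M) (k : K) :
    succP Wc n f φ m k ≤ 1 := by
  rw [← cP_sum hW hf m k]
  exact Finset.sum_le_sum fun y _ =>
    mul_le_of_le_one_right (cP_nonneg hW hf m k y) (phi_le_one hφ _ _)

/-- A crude converse: the number of messages is at most `2 |𝒴|ⁿ` if the error is at most `1/2`. -/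
lemma card_bound {M K : Type*} [Fintype M] [Fintype K] {Wc : 𝒳 → 𝒴 → ℝ} (hW : IsStochastic Wc)
    {n : ℕ} {f : M × K → (Fin n → 𝒳) → ℝ} {φ : (Fin n → 𝒴) × K → Option M → ℝ}
    (hf : IsStochastic f) (hφ : IsStochastic φ)
    (he : 1 - (∑ y, ∑ m, ∑ k, pOut Wc n f y m k * φ (y, k) (some m)) ≤ 1 / 2) :
    0 < Fintype.card M ∧ 0 < Fintype.card K ∧
      (Fintype.card M : ℝ) ≤ 2 * (Fintype.card 𝒴 : ℝ) ^ n := by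
  rw [succ_sum_eq] at he
  have hM : 0 < Fintype.card M := by
    rcases Nat.eq_zero_or_pos (Fintype.card M) with h | h
    · rw [h] at he; norm_num at he
    · exact h
  have hK : 0 < Fintype.card K := by
    rcases Nat.eq_zero_or_pos (Fintype.card K) with h | h
    · rw [h] at he; norm_num at he
    · exact h
  refine ⟨hM, hK, ?_⟩
  have hM' : (0 : ℝ) < Fintype.card M := by exact_mod_cast hM
  have hK' : (0 : ℝ) < Fintype.card K := by exact_mod_cast hK
  have hb : ∑ m, ∑ k, succP Wc n f φ m k ≤ (Fintype.card K : ℝ) * (Fintype.card 𝒴 : ℝ) ^ n := by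
    rw [Finset.sum_comm]
    calc ∑ k, ∑ m, succP Wc n f φ m k ≤ ∑ k : K, (Fintype.card 𝒴 : ℝ) ^ n := by
          refine Finset.sum_le_sum fun k _ => ?_
          unfold succP
          rw [Finset.sum_comm]
          calc ∑ y, ∑ m, cP Wc n f m k y * φ (y, k) (some m) ≤ ∑ y : Fin n → 𝒴, (1 : ℝ) := by
                refine Finset.sum_le_sum fun y _ => ?_
                refine le_trans (Finset.sum_le_sum fun m _ => ?_) (phi_some_le_one hφ (y, k))
                exact mul_le_of_le_one_left (hφ.1 _ _) (cP_le_one hW hf m k y)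
            _ = (Fintype.card 𝒴 : ℝ) ^ n := by simp
      _ = _ := by simp
  have h1 : (1 : ℝ) / 2 ≤ (Fintype.card M : ℝ)⁻¹ * (Fintype.card K : ℝ)⁻¹ *
      ((Fintype.card K : ℝ) * (Fintype.card 𝒴 : ℝ) ^ n) := by
    refine le_trans (by linarith) (mul_le_mul_of_nonneg_left hb (by positivity))
  have h2 : (Fintype.card M : ℝ)⁻¹ * (Fintype.card K : ℝ)⁻¹ *
      ((Fintype.card K : ℝ) * (Fintype.card 𝒴 : ℝ) ^ n)
        = (Fintype.card 𝒴 : ℝ) ^ n / Fintype.card M := by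
    field_simp
  rw [h2, le_div_iff₀ hM'] at h1
  linarith

/-- Change of variables in the key. -/
lemma reindex {M K T : Type*} [Fintype M] [Fintype K] [Fintype T] [AddCommGroup T]
    (h : T → M → T) (g : M → K → T → T → ℝ) :
    ∑ m, ∑ q : K × T × T, g m q.1 q.2.1 (h q.2.1 m + q.2.2)
      = ∑ m, ∑ k, ∑ t, ∑ a, g m k a t := by
  refine Finset.sum_congr rfl fun m _ => ?_
  rw [Fintype.sum_prod_type]
  refine Finset.sum_congr rfl fun k _ => ?_
  rw [Fintype.sum_prod_type, Finset.sum_comm' (s := Finset.univ) (t' := Finset.univ)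
    (t := fun _ => Finset.univ) (s' := fun _ => Finset.univ) (by simp)]
  rw [Finset.sum_comm]
  conv_rhs => rw [Finset.sum_comm]
  refine Finset.sum_congr rfl fun a _ => ?_
  exact Fintype.sum_equiv (Equiv.addLeft (h a m)) _ _ (fun b => rfl)

lemma collision {M M' T : Type*} [Fintype M] [Fintype M'] [Fintype T] [AddCommGroup T]
    (h : T → M' → T) (ι : M' × T → M) (hι : Function.Injective ι) (L : ℕ)
    (hh : ∀ m m' s, m' ≠ m → (Finset.univ.filter fun a => h a m' - h a m = s).card ≤ L)
    (F : M → ℝ) (hF : ∀ μ, 0 ≤ F μ) (m : M') (t : T) :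
    ∑ a, ∑ m' ∈ Finset.univ.erase m, F (ι (m', h a m' - h a m + t))
      ≤ L * ∑ μ ∈ Finset.univ.erase (ι (m, t)), F μ := by
  rw [Finset.sum_comm]
  have h1 : ∀ m' ∈ Finset.univ.erase m,
      ∑ a, F (ι (m', h a m' - h a m + t)) ≤ L * ∑ t', F (ι (m', t')) := by
    intro m' hm'
    have hne := (Finset.mem_erase.1 hm').1
    calc ∑ a, F (ι (m', h a m' - h a m + t))
        = ∑ a, ∑ t', if h a m' - h a m = t' - t then F (ι (m', t')) else 0 := by
          refine Finset.sum_congr rfl fun a _ => ?_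
          simp_rw [eq_sub_iff_add_eq]
          rw [Finset.sum_ite_eq]
          simp
      _ = ∑ t', ∑ a, if h a m' - h a m = t' - t then F (ι (m', t')) else 0 := Finset.sum_comm
      _ ≤ ∑ t', L * F (ι (m', t')) := by
          refine Finset.sum_le_sum fun t' _ => ?_
          rw [← Finset.sum_filter, Finset.sum_const, nsmul_eq_mul]
          exact mul_le_mul_of_nonneg_right (by exact_mod_cast hh m m' _ hne) (hF _)
      _ = _ := by rw [Finset.mul_sum]
  refine (Finset.sum_le_sum h1).trans ?_
  rw [← Finset.mul_sum]
  refine mul_le_mul_of_nonneg_left ?_ (Nat.cast_nonneg _)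
  rw [← Finset.sum_product (Finset.univ.erase m) Finset.univ (fun u => F (ι u)),
    ← Finset.sum_image (f := F) (g := ι) hι.injOn]
  refine Finset.sum_le_sum_of_subset_of_nonneg ?_ (fun μ _ _ => hF μ)
  intro μ hμ
  obtain ⟨u, hu, rfl⟩ := Finset.mem_image.1 hμ
  refine Finset.mem_erase.2 ⟨fun he => ?_, Finset.mem_univ _⟩
  have := hι he
  rw [this] at hu
  simp at hu

/-- The encoder of the modified code. -/
def newF {M M' K T : Type*} [Add T] (ι : M' × T → M) (h : T → M' → T) {n : ℕ}
    (f : M × K → (Fin n → 𝒳) → ℝ) : M' × (K × T × T) → (Fin n → 𝒳) → ℝ :=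
  fun q => f (ι (q.1, h q.2.2.1 q.1 + q.2.2.2), q.2.1)

/-- The decoder of the modified code. -/
def newPhi {M M' K T : Type*} [Fintype M'] [Add T] (ι : M' × T → M) (h : T → M' → T) {n : ℕ}
    (φ : (Fin n → 𝒴) × K → Option M → ℝ) :
    (Fin n → 𝒴) × (K × T × T) → Option M' → ℝ :=
  fun q o => o.elim
    (1 - ∑ m, φ (q.1, q.2.1) (some (ι (m, h q.2.2.1 m + q.2.2.2))))
    (fun m => φ (q.1, q.2.1) (some (ι (m, h q.2.2.1 m + q.2.2.2))))

lemma newPhi_stoch {M M' K T : Type*} [Fintype M] [Fintype M'] [Add T] (ι : M' × T → M)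
    (hι : Function.Injective ι) (h : T → M' → T) {n : ℕ}
    {φ : (Fin n → 𝒴) × K → Option M → ℝ} (hφ : IsStochastic φ) :
    IsStochastic (newPhi ι h φ) := by
  constructor
  · rintro q (_ | m)
    · have : ∑ m, φ (q.1, q.2.1) (some (ι (m, h q.2.2.1 m + q.2.2.2))) ≤ 1 := by
        refine le_trans ?_ (phi_some_le_one hφ (q.1, q.2.1))
        rw [← Finset.sum_image (f := fun μ => φ (q.1, q.2.1) (some μ))
          (g := fun m => ι (m, h q.2.2.1 m + q.2.2.2))]
        · exact Finset.sum_le_sum_of_subset_of_nonneg (Finset.subset_univ _)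
            (fun μ _ _ => hφ.1 _ _)
        · intro a _ b _ hab
          exact (Prod.mk.inj (hι hab)).1
      simp only [newPhi, Option.elim]
      linarith
    · exact hφ.1 _ _
  · intro q
    rw [Fintype.sum_option]
    simp [newPhi]

lemma sub_sum {M M' K T : Type*} [Fintype M] [Fintype M'] [Fintype K] [Fintype T]
    (ι : M' × T → M) (hι : Function.Injective ι) (G : M → K → ℝ) (hG : ∀ μ k, 0 ≤ G μ k) :
    ∑ m, ∑ k, ∑ t, G (ι (m, t)) k ≤ ∑ μ, ∑ k, G μ k := by
  calc ∑ m, ∑ k, ∑ t, G (ι (m, t)) k = ∑ m, ∑ t, ∑ k, G (ι (m, t)) k :=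
        Finset.sum_congr rfl fun m _ => Finset.sum_comm
    _ = ∑ u : M' × T, ∑ k, G (ι u) k := by rw [Fintype.sum_prod_type]
    _ = ∑ μ ∈ Finset.univ.image ι, ∑ k, G μ k := by
        rw [Finset.sum_image (f := fun μ => ∑ k, G μ k) hι.injOn]
    _ ≤ _ := Finset.sum_le_sum_of_subset_of_nonneg (Finset.subset_univ _)
        (fun μ _ _ => Finset.sum_nonneg fun k _ => hG μ k)

lemma frac_bound {cM cK cM' cT E E' δ : ℝ} (hM : 0 < cM) (hK : 0 < cK) (hM' : 0 < cM')
    (hT : 0 < cT) (hc : cM ≤ 2 * (cM' * cT)) (hE' : E' ≤ E) (hE0 : 0 ≤ E)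
    (hE : cM⁻¹ * cK⁻¹ * E ≤ δ) : (cM' * cK * cT)⁻¹ * E' ≤ 2 * δ := by
  have h1 : (cM' * cK * cT)⁻¹ ≤ 2 * (cM⁻¹ * cK⁻¹) := by
    rw [← mul_inv, ← div_eq_mul_inv, inv_eq_one_div, div_le_div_iff₀ (by positivity) (by positivity)]
    nlinarith
  calc (cM' * cK * cT)⁻¹ * E' ≤ (cM' * cK * cT)⁻¹ * E :=
        mul_le_mul_of_nonneg_left hE' (by positivity)
    _ ≤ 2 * (cM⁻¹ * cK⁻¹) * E := mul_le_mul_of_nonneg_right h1 hE0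
    _ ≤ 2 * δ := by linarith

lemma core {M M' K T : Type*} [Fintype M] [Fintype M'] [Fintype K] [Fintype T] [AddCommGroup T]
    {Wc : 𝒳 → 𝒴 → ℝ} {Vc : 𝒳 → 𝒵 → ℝ} (hWc : IsStochastic Wc) (hVc : IsStochastic Vc)
    {r α κ δ r' α' κ' : ℝ} {n : ℕ}
    {f : M × K → (Fin n → 𝒳) → ℝ} {φ : (Fin n → 𝒴) × K → Option M → ℝ}
    (hcode : IsTACode Wc Vc r α κ δ n f φ)
    (h : T → M' → T) (ι : M' × T → M) (hι : Function.Injective ι) (L : ℕ)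
    (hh : ∀ m m' s, m' ≠ m → (Finset.univ.filter fun a => h a m' - h a m = s).card ≤ L)
    (hM : 0 < Fintype.card M) (hM' : 0 < Fintype.card M') (hK : 0 < Fintype.card K)
    (hc : (Fintype.card M : ℝ) ≤ 2 * (Fintype.card M' * Fintype.card T))
    (hr : r' ≤ Real.logb 2 (Fintype.card M') / n)
    (hκ : Real.logb 2 (Fintype.card (K × T × T)) / n ≤ κ') :
    IsTACode Wc Vc r' α' κ'
      (2 * δ + L * ((2 : ℝ) ^ (-(n : ℝ) * α) / (2 : ℝ) ^ (-(n : ℝ) * α')) / Fintype.card T) n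
      (newF ι h f) (newPhi ι h φ) := by
  obtain ⟨hf, hφ, -, -, herr, hsec⟩ := hcode
  have hf' : IsStochastic (newF ι h f) := ⟨fun q x => hf.1 _ _, fun q => hf.2 _⟩
  have hφ' := newPhi_stoch ι hι h hφ
  have hT : 0 < Fintype.card T := Fintype.card_pos_iff.2 ⟨0⟩
  have cM : (0 : ℝ) < Fintype.card M := by exact_mod_cast hM
  have cM' : (0 : ℝ) < Fintype.card M' := by exact_mod_cast hM'
  have cK : (0 : ℝ) < Fintype.card K := by exact_mod_cast hK
  have cT : (0 : ℝ) < Fintype.card T := by exact_mod_cast hT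
  set θ := (2 : ℝ) ^ (-(n : ℝ) * α) with hθ
  set θ' := (2 : ℝ) ^ (-(n : ℝ) * α') with hθ'
  have pθ : 0 < θ := by positivity
  have pθ' : 0 < θ' := by positivity
  refine ⟨hf', hφ', hr, hκ, ?_, ?_⟩
  · refine le_trans (b := 2 * δ) ?_ (le_add_of_nonneg_right (by positivity))
    rw [succ_sum_eq] at herr ⊢
    have e1 : ∑ m, ∑ q, succP Wc n (newF ι h f) (newPhi ι h φ) m q
        = ∑ m, ∑ k, ∑ t, ∑ _a : T, succP Wc n f φ (ι (m, t)) k := by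
      rw [← reindex h (fun m k _ t => succP Wc n f φ (ι (m, t)) k)]
      rfl
    have e2 := sub_sum ι hι (fun μ (k : K) => 1 - succP Wc n f φ μ k)
      (fun μ k => sub_nonneg.2 (succP_le_one hWc hf hφ μ k))
    have e3 : (Fintype.card M : ℝ)⁻¹ * (Fintype.card K : ℝ)⁻¹ *
        ∑ μ, ∑ k, (1 - succP Wc n f φ μ k) ≤ δ := by
      refine le_trans (le_of_eq ?_) herr
      simp only [Finset.sum_sub_distrib, Finset.sum_const, Finset.card_univ, nsmul_eq_mul]
      field_simp
    have e4 := frac_bound cM cK cM' cT hc e2 (Finset.sum_nonneg fun μ _ =>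
      Finset.sum_nonneg fun k _ => sub_nonneg.2 (succP_le_one hWc hf hφ μ k)) e3
    refine le_trans (le_of_eq ?_) e4
    rw [e1]
    simp only [Finset.sum_sub_distrib, Finset.sum_const, Finset.card_univ, nsmul_eq_mul,
      Fintype.card_prod, Nat.cast_mul, ← Finset.mul_sum]
    field_simp
  · intro ψ hψ
    specialize hsec ψ hψ
    set ω : (Fin n → 𝒵) → M → K → ℝ := fun z μ k =>
      ∑ y, ψ z y * ∑ m' ∈ Finset.univ.erase μ, φ (y, k) (some m') with hω
    set Ω : (Fin n → 𝒵) → M' → K → T → T → ℝ := fun z m k a t =>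
      ∑ y, ψ z y * ∑ m' ∈ Finset.univ.erase m,
        φ (y, k) (some (ι (m', h a m' - h a m + t))) with hΩ
    have Ω0 : ∀ z m k a t, 0 ≤ Ω z m k a t := fun z m k a t =>
      Finset.sum_nonneg fun y _ => mul_nonneg (hψ.1 _ _)
        (Finset.sum_nonneg fun m' _ => hφ.1 _ _)
    have Ωω : ∀ z m k t, ∑ a, Ω z m k a t ≤ L * ω z (ι (m, t)) k := by
      intro z m k t
      simp only [hΩ, hω]
      rw [Finset.sum_comm, Finset.mul_sum]
      refine Finset.sum_le_sum fun y _ => ?_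
      rw [← Finset.mul_sum, mul_left_comm]
      exact mul_le_mul_of_nonneg_left
        (collision h ι hι L hh (fun μ => φ (y, k) (some μ)) (fun μ => hφ.1 _ _) m t) (hψ.1 _ _)
    set G : M → K → ℝ := fun μ k => ∑ z, if θ < ω z μ k then cP Vc n f μ k z else 0 with hG
    have G0 : ∀ μ k, 0 ≤ G μ k := fun μ k => Finset.sum_nonneg fun z _ => by
      split_ifs
      · exact cP_nonneg hVc hf μ k z
      · exact le_rfl
    have e3 : (Fintype.card M : ℝ)⁻¹ * (Fintype.card K : ℝ)⁻¹ * ∑ μ, ∑ k, G μ k ≤ δ := by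
      refine le_trans (le_of_eq ?_) hsec
      simp only [hG]
      conv_rhs => rw [Finset.sum_comm]
      rw [Finset.mul_sum]
      refine Finset.sum_congr rfl fun m _ => ?_
      conv_rhs => rw [Finset.sum_comm]
      rw [Finset.mul_sum]
      refine Finset.sum_congr rfl fun k _ => ?_
      rw [Finset.mul_sum]
      refine Finset.sum_congr rfl fun z _ => ?_
      rw [pOut_eq, mul_ite, mul_zero]
    have e4 := frac_bound cM cK cM' cT hc (sub_sum ι hι G G0) (Finset.sum_nonneg fun μ _ =>
      Finset.sum_nonneg fun k _ => G0 μ k) e3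
    set C : ℝ := (Fintype.card M' : ℝ)⁻¹ * (Fintype.card (K × T × T) : ℝ)⁻¹ with hC
    have C0 : 0 ≤ C := by positivity
    have pt : ∀ z m k t, ∑ a, (if θ' < Ω z m k a t then C * cP Vc n f (ι (m, t)) k z else 0)
        ≤ C * (Fintype.card T * (if θ < ω z (ι (m, t)) k then cP Vc n f (ι (m, t)) k z else 0)
            + L * (θ / θ') * cP Vc n f (ι (m, t)) k z) := by
      intro z m k t
      have P0 := cP_nonneg hVc hf (ι (m, t)) k z
      set P := cP Vc n f (ι (m, t)) k z
      by_cases hw : θ < ω z (ι (m, t)) k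
      · rw [if_pos hw]
        calc ∑ a, (if θ' < Ω z m k a t then C * P else 0) ≤ ∑ _a : T, C * P := by
              refine Finset.sum_le_sum fun a _ => ?_
              split_ifs
              · exact le_rfl
              · positivity
          _ = C * (Fintype.card T * P) := by simp; ring
          _ ≤ _ := mul_le_mul_of_nonneg_left (le_add_of_nonneg_right (by positivity)) C0
      · rw [if_neg hw]
        push Not at hw
        calc ∑ a, (if θ' < Ω z m k a t then C * P else 0) ≤ ∑ a, C * P / θ' * Ω z m k a t := by
              refine Finset.sum_le_sum fun a _ => ?_
              split_ifs with hlt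
              · rw [div_mul_eq_mul_div, le_div_iff₀ pθ']
                exact mul_le_mul_of_nonneg_left hlt.le (by positivity)
              · exact mul_nonneg (by positivity) (Ω0 _ _ _ _ _)
          _ = C * P / θ' * ∑ a, Ω z m k a t := by rw [Finset.mul_sum]
          _ ≤ C * P / θ' * (L * θ) := by
              refine mul_le_mul_of_nonneg_left ((Ωω z m k t).trans ?_) (by positivity)
              exact mul_le_mul_of_nonneg_left hw (Nat.cast_nonneg _)
          _ = _ := by ring
    have e1 : ∀ z, (∑ m, ∑ q, (if θ' < ∑ y, ψ z y * ∑ m' ∈ Finset.univ.erase m,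
          newPhi ι h φ (y, q) (some m') then pOut Vc n (newF ι h f) z m q else 0))
        = ∑ m, ∑ k, ∑ t, ∑ a,
          (if θ' < Ω z m k a t then C * cP Vc n f (ι (m, t)) k z else 0) := by
      intro z
      rw [← reindex h (fun m k a t =>
        if θ' < Ω z m k a t then C * cP Vc n f (ι (m, t)) k z else 0)]
      refine Finset.sum_congr rfl fun m _ => Finset.sum_congr rfl fun q _ => ?_
      have : (∑ y, ψ z y * ∑ m' ∈ Finset.univ.erase m, newPhi ι h φ (y, q) (some m'))
          = Ω z m q.1 q.2.1 (h q.2.1 m + q.2.2) := by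
        simp only [hΩ]
        refine Finset.sum_congr rfl fun y _ => ?_
        congr 1
        refine Finset.sum_congr rfl fun m' _ => ?_
        rw [← add_assoc, sub_add_cancel]
        rfl
      rw [this, pOut_eq]
      rfl
    have e5 : ∑ z, ∑ m : M', ∑ k : K, ∑ t : T,
        C * (Fintype.card T * (if θ < ω z (ι (m, t)) k then cP Vc n f (ι (m, t)) k z else 0)
            + L * (θ / θ') * cP Vc n f (ι (m, t)) k z)
        = ((Fintype.card M' : ℝ) * Fintype.card K * Fintype.card T)⁻¹ *
            (∑ m, ∑ k, ∑ t, G (ι (m, t)) k) + L * (θ / θ') / Fintype.card T := by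
      rw [Finset.sum_comm]
      have : ∀ m : M', ∑ z, ∑ k : K, ∑ t : T,
        C * (Fintype.card T * (if θ < ω z (ι (m, t)) k then cP Vc n f (ι (m, t)) k z else 0)
            + L * (θ / θ') * cP Vc n f (ι (m, t)) k z)
          = ∑ k : K, ∑ t : T, C * (Fintype.card T * G (ι (m, t)) k + L * (θ / θ')) := by
        intro m
        rw [Finset.sum_comm]
        refine Finset.sum_congr rfl fun k _ => ?_
        rw [Finset.sum_comm]
        refine Finset.sum_congr rfl fun t _ => ?_
        rw [← Finset.mul_sum, Finset.sum_add_distrib, ← Finset.mul_sum, ← Finset.mul_sum,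
          cP_sum hVc hf, mul_one]
      simp_rw [this, ← Finset.mul_sum, Finset.sum_add_distrib, ← Finset.mul_sum]
      simp only [Finset.sum_const, Finset.card_univ, nsmul_eq_mul, hC,
        Fintype.card_prod, Nat.cast_mul]
      field_simp
    refine le_trans (le_of_eq (Finset.sum_congr rfl fun z _ => e1 z)) ?_
    refine le_trans (Finset.sum_le_sum fun z _ => Finset.sum_le_sum fun m _ =>
      Finset.sum_le_sum fun k _ => Finset.sum_le_sum fun t _ => pt z m k t) ?_
    rw [e5]
    linarith

lemma transfer {M K K' : Type*} [Fintype M] [Fintype K] [Fintype K'] (e : K' ≃ K)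
    {Wc : 𝒳 → 𝒴 → ℝ} {Vc : 𝒳 → 𝒵 → ℝ} {r α κ δ : ℝ} {n : ℕ}
    {f : M × K → (Fin n → 𝒳) → ℝ} {φ : (Fin n → 𝒴) × K → Option M → ℝ}
    (hcode : IsTACode Wc Vc r α κ δ n f φ) :
    IsTACode Wc Vc r α κ δ n (fun q => f (q.1, e q.2)) (fun q => φ (q.1, e q.2)) := by
  obtain ⟨hf, hφ, hr, hκ, herr, hsec⟩ := hcode
  have hc := Fintype.card_congr e
  refine ⟨⟨fun q => hf.1 _, fun q => hf.2 _⟩, ⟨fun q => hφ.1 _, fun q => hφ.2 _⟩, hr,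
    by rwa [hc], ?_, ?_⟩
  · refine le_trans (le_of_eq ?_) herr
    congr 1
    refine Finset.sum_congr rfl fun y _ => Finset.sum_congr rfl fun m _ => ?_
    refine Fintype.sum_equiv e _ _ fun k => ?_
    rw [pOut_eq, pOut_eq, hc]
    rfl
  · intro ψ hψ
    refine le_trans (le_of_eq ?_) (hsec ψ hψ)
    refine Finset.sum_congr rfl fun y _ => Finset.sum_congr rfl fun m _ => ?_
    refine Fintype.sum_equiv e _ _ fun k => ?_
    rw [pOut_eq, pOut_eq, hc]
    rfl

lemma hash_exists (p : ℕ) [Fact p.Prime] (M' : Type) [Fintype M'] (L : ℕ)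
    (hL : Fintype.card M' ≤ 2 ^ L) :
    ∃ h : ZMod p → M' → ZMod p,
      ∀ m m' s, m' ≠ m → (Finset.univ.filter fun a => h a m' - h a m = s).card ≤ L := by
  have hp := (Fact.out : p.Prime).two_le
  have hcard : Fintype.card M' ≤ Fintype.card (Fin L → ZMod p) := by
    simp only [Fintype.card_fun, ZMod.card, Fintype.card_fin]
    exact hL.trans (Nat.pow_le_pow_left hp L)
  obtain ⟨c⟩ := Function.Embedding.nonempty_of_card_le hcard
  refine ⟨fun a m => ∑ j : Fin L, c m j * a ^ (j.val + 1), fun m m' s hne => ?_⟩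
  let P : Polynomial (ZMod p) :=
    ∑ j : Fin L, Polynomial.C (c m' j - c m j) * Polynomial.X ^ (j.val + 1) - Polynomial.C s
  have hP0 : P ≠ 0 := by
    intro h0
    apply hne
    apply c.injective
    funext j
    have := congrArg (fun Q => Polynomial.coeff Q (j.val + 1)) h0
    simp only [P, Polynomial.coeff_sub, Polynomial.finsetSum_coeff, Polynomial.coeff_C_mul,
      Polynomial.coeff_X_pow, Polynomial.coeff_C, Polynomial.coeff_zero, add_left_inj,
      Nat.succ_ne_zero, if_false, sub_zero, mul_ite, mul_one, mul_zero, Fin.val_inj] at this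
    rw [Finset.sum_ite_eq] at this
    simpa [sub_eq_zero] using this
  have hdeg : P.natDegree ≤ L := by
    refine (Polynomial.natDegree_sub_le _ _).trans (max_le ?_ (by simp))
    refine Polynomial.natDegree_sum_le_of_forall_le _ _ fun j _ => ?_
    refine (Polynomial.natDegree_C_mul_X_pow_le _ _).trans ?_
    have := j.isLt
    omega
  refine le_trans ?_ hdeg
  refine le_trans ?_ (Polynomial.card_roots' P)
  refine le_trans (Finset.card_le_card (t := P.roots.toFinset) ?_) (Multiset.toFinset_card_le _)
  intro a ha
  rw [Finset.mem_filter] at ha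
  rw [Multiset.mem_toFinset, Polynomial.mem_roots hP0, Polynomial.IsRoot.def]
  simp only [P, Polynomial.eval_sub, Polynomial.eval_finsetSum, Polynomial.eval_mul,
    Polynomial.eval_C, Polynomial.eval_pow, Polynomial.eval_X]
  rw [← ha.2, ← Finset.sum_sub_distrib]
  simp [sub_mul]

lemma mono_delta {M K : Type*} [Fintype M] [Fintype K]
    {Wc : 𝒳 → 𝒴 → ℝ} {Vc : 𝒳 → 𝒵 → ℝ} {r α κ δ δ' : ℝ} {n : ℕ}
    {f : M × K → (Fin n → 𝒳) → ℝ} {φ : (Fin n → 𝒴) × K → Option M → ℝ}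
    (hcode : IsTACode Wc Vc r α κ δ n f φ) (h : δ ≤ δ') :
    IsTACode Wc Vc r α κ δ' n f φ := by
  obtain ⟨hf, hφ, hr, hκ, herr, hsec⟩ := hcode
  exact ⟨hf, hφ, hr, hκ, herr.trans h, fun ψ hψ => (hsec ψ hψ).trans h⟩

lemma step {Wc : 𝒳 → 𝒴 → ℝ} {Vc : 𝒳 → 𝒵 → ℝ} (hWc : IsStochastic Wc) (hVc : IsStochastic Vc)
    {r α κ δ β : ℝ} {n : ℕ} (hn : 0 < n) (hβ : 0 ≤ β) (hδ : δ ≤ 1 / 2)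
    (hrβ : 2 ≤ n * (r - β)) {Mc Kc : ℕ}
    {f : Fin Mc × Fin Kc → (Fin n → 𝒳) → ℝ} {φ : (Fin n → 𝒴) × Fin Kc → Option (Fin Mc) → ℝ}
    (hcode : IsTACode Wc Vc r α κ δ n f φ) :
    ∃ (Mc' Kc' : ℕ) (f' : Fin Mc' × Fin Kc' → (Fin n → 𝒳) → ℝ)
      (φ' : (Fin n → 𝒴) × Fin Kc' → Option (Fin Mc') → ℝ),
      IsTACode Wc Vc (r - β - 3 / n)
        (α + β - 2 * (Real.logb 2 ((n * (Fintype.card 𝒴 + 1) : ℕ) : ℝ) / n))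
        (κ + 2 * β + 4 / n) (2 * δ + 1 / ((n * (Fintype.card 𝒴 + 1) : ℕ) : ℝ)) n f' φ' := by
  obtain ⟨hf, hφ, hr, hκ, herr, -⟩ := id hcode
  obtain ⟨hM, hK, hMb⟩ := card_bound hWc hf hφ (herr.trans hδ)
  simp only [Fintype.card_fin] at hM hK hMb hr hκ
  have hn' : (0 : ℝ) < n := by exact_mod_cast hn
  have hM' : (0 : ℝ) < Mc := by exact_mod_cast hM
  have hK' : (0 : ℝ) < Kc := by exact_mod_cast hK
  set L := n * (Fintype.card 𝒴 + 1) with hLdef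
  have hL0 : 0 < L := by positivity
  have hL0' : (0 : ℝ) < L := by exact_mod_cast hL0
  -- the number of messages
  have hMcL : Mc ≤ 2 ^ L := by
    have h1 : Mc ≤ 2 * Fintype.card 𝒴 ^ n := by exact_mod_cast hMb
    calc Mc ≤ 2 * Fintype.card 𝒴 ^ n := h1
      _ ≤ 2 ^ 1 * (2 ^ Fintype.card 𝒴) ^ n := by
        rw [pow_one]
        exact Nat.mul_le_mul_left _ (Nat.pow_le_pow_left Nat.lt_two_pow_self.le n)
      _ = 2 ^ (1 + Fintype.card 𝒴 * n) := by rw [← pow_mul, ← pow_add]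
      _ ≤ 2 ^ L := Nat.pow_le_pow_right (by norm_num) (by rw [hLdef]; nlinarith)
  -- the prime
  set B := (2 : ℝ) ^ (n * β) with hB
  have hB1 : 1 ≤ B := Real.one_le_rpow (by norm_num) (by positivity)
  have hN0 : ⌈B⌉₊ ≠ 0 := by
    have : 0 < ⌈B⌉₊ := Nat.ceil_pos.2 (by linarith)
    omega
  obtain ⟨p, hp, hp1, hp2⟩ := Nat.exists_prime_lt_and_le_two_mul _ hN0
  haveI : Fact p.Prime := ⟨hp⟩
  have hp0 : (0 : ℝ) < p := by exact_mod_cast hp.pos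
  have hpB : B ≤ p := (Nat.le_ceil B).trans (by exact_mod_cast hp1.le)
  have hpB4 : (p : ℝ) ≤ 4 * B := by
    have h1 : (p : ℝ) ≤ 2 * (⌈B⌉₊ : ℝ) := by exact_mod_cast hp2
    have h2 := Nat.ceil_lt_add_one (a := B) (by linarith)
    linarith
  have h2 : (1 : ℝ) < 2 := by norm_num
  have hlogB : Real.logb 2 (4 * B) = 2 + n * β := by
    rw [Real.logb_mul (by norm_num) (by positivity), hB, Real.logb_rpow (by norm_num) (by norm_num)]
    congr 1
    rw [show (4 : ℝ) = 2 ^ (2 : ℝ) by norm_num, Real.logb_rpow (by norm_num) (by norm_num)]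
  have hlogp : Real.logb 2 p ≤ 2 + n * β := by
    rw [← hlogB]
    exact Real.logb_le_logb_of_le h2 hp0 hpB4
  have hlogM : n * r ≤ Real.logb 2 Mc := by
    rw [le_div_iff₀ hn'] at hr; linarith
  have hpM : p ≤ Mc := by
    have : (p : ℝ) ≤ Mc := by
      rw [← Real.logb_le_logb h2 hp0 hM']
      linarith
    exact_mod_cast this
  set Q := Mc / p with hQ
  have hQ0 : 0 < Q := Nat.div_pos hpM hp.pos
  have hQ0' : (0 : ℝ) < Q := by exact_mod_cast hQ0
  have hQp : Q * p ≤ Mc := Nat.div_mul_le_self _ _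
  have hQ2 : Mc ≤ 2 * (Q * p) := by
    have h3 := Nat.div_add_mod Mc p
    have h4 := Nat.mod_lt Mc hp.pos
    have h5 : 1 * p ≤ Q * p := Nat.mul_le_mul_right _ hQ0
    rw [← hQ, mul_comm] at h3
    omega
  have hQ2' : (Mc : ℝ) ≤ 2 * (Q * p) := by exact_mod_cast hQ2
  obtain ⟨h, hh⟩ := hash_exists p (Fin Q) L (by
    rw [Fintype.card_fin]; exact (Nat.div_le_self _ _).trans hMcL)
  have hemb : Fintype.card (Fin Q × ZMod p) ≤ Fintype.card (Fin Mc) := by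
    simpa [ZMod.card] using hQp
  obtain ⟨ι⟩ := Function.Embedding.nonempty_of_card_le hemb
  have key := core (α' := α + β - 2 * (Real.logb 2 (L : ℝ) / n)) (r' := r - β - 3 / n)
    (κ' := κ + 2 * β + 4 / n) hWc hVc hcode h ι ι.injective L
    (fun m m1 s hne => by convert hh m m1 s hne) (by simpa using hM)
    (by simpa using hQ0) (by simpa using hK) (by simpa [ZMod.card] using hQ2')
    (by
      rw [Fintype.card_fin, le_div_iff₀ hn']
      have h6 := Real.logb_le_logb_of_le h2 hM' hQ2'
      rw [Real.logb_mul (by norm_num) (by positivity), Real.logb_mul (by positivity) (by positivity),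
        Real.logb_self_eq_one h2] at h6
      have : (r - β - 3 / n) * n = n * r - n * β - 3 := by field_simp
      rw [this]
      linarith)
    (by
      simp only [Fintype.card_prod, Fintype.card_fin, ZMod.card, Nat.cast_mul]
      rw [Real.logb_mul (by positivity) (by positivity), Real.logb_mul (by positivity) (by positivity),
        div_le_iff₀ hn']
      rw [div_le_iff₀ hn'] at hκ
      have : (κ + 2 * β + 4 / n) * n = κ * n + 2 * (n * β) + 4 := by field_simp
      rw [this]
      linarith)
  refine ⟨Q, _, _, _, mono_delta
    (transfer (Fintype.equivFin (Fin Kc × ZMod p × ZMod p)).symm key) ?_⟩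
  have h7 : (2 : ℝ) ^ (-(n : ℝ) * α) / (2 : ℝ) ^ (-(n : ℝ) * (α + β - 2 * (Real.logb 2 (L : ℝ) / n)))
      = B / (L : ℝ) ^ 2 := by
    rw [← Real.rpow_sub (by norm_num)]
    have : -(n : ℝ) * α - -(n : ℝ) * (α + β - 2 * (Real.logb 2 (L : ℝ) / n))
        = n * β - (Real.logb 2 (L : ℝ) + Real.logb 2 (L : ℝ)) := by field_simp; ring
    rw [this, Real.rpow_sub (by norm_num), Real.rpow_add (by norm_num),
      Real.rpow_logb (by norm_num) (by norm_num) hL0', sq]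
  rw [h7, ZMod.card]
  have : (L : ℝ) * (B / (L : ℝ) ^ 2) / p ≤ 1 / L := by
    rw [div_le_div_iff₀ hp0 hL0']
    have : (L : ℝ) * (B / (L : ℝ) ^ 2) * L = B := by field_simp
    rw [this]; linarith
  linarith

/-- Theorem `lem:-t`: if `(r, α, κ) ∈ C_TA(p_{Y|X}, p_{Z|X})`, then
`(r − β, α + β, κ + 2β) ∈ C_TA(p_{Y|X}, p_{Z|X})` for every nonnegative `β < r`. -/
theorem statement1 {𝒳 𝒴 𝒵 : Type} [Fintype 𝒳] [Fintype 𝒴] [Fintype 𝒵]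
    (Wc : 𝒳 → 𝒴 → ℝ) (Vc : 𝒳 → 𝒵 → ℝ)
    (hWc : IsStochastic Wc) (hVc : IsStochastic Vc)
    (r α κ : ℝ) (h : (r, α, κ) ∈ CTA Wc Vc)
    (β : ℝ) (hβ0 : 0 ≤ β) (hβr : β < r) :
    (r - β, α + β, κ + 2 * β) ∈ CTA Wc Vc := by
  obtain ⟨-, rs, αs, κs, ds, hcode, hlim⟩ := h
  simp only [nhds_prod_eq] at hlim
  have hr : Filter.Tendsto rs Filter.atTop (nhds r) := hlim.fst
  have hα : Filter.Tendsto αs Filter.atTop (nhds α) := hlim.snd.fst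
  have hκ : Filter.Tendsto κs Filter.atTop (nhds κ) := hlim.snd.snd.fst
  have hd : Filter.Tendsto ds Filter.atTop (nhds 0) := hlim.snd.snd.snd
  have hnat : Filter.Tendsto (fun i : ℕ => (i : ℝ)) Filter.atTop Filter.atTop :=
    tendsto_natCast_atTop_atTop
  have hinv : ∀ c : ℝ, Filter.Tendsto (fun i : ℕ => c / (i : ℝ)) Filter.atTop (nhds 0) :=
    fun c => hnat.const_div_atTop c
  let A : ℕ := Fintype.card 𝒴 + 1
  have hA : (0 : ℝ) < A := by positivity
  have hLlim : Filter.Tendsto (fun i : ℕ => ((i * A : ℕ) : ℝ)) Filter.atTop Filter.atTop := by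
    push_cast
    exact hnat.atTop_mul_const hA
  have hlog : Filter.Tendsto (fun i : ℕ => Real.logb 2 ((i * A : ℕ) : ℝ) / i)
      Filter.atTop (nhds 0) := by
    have h1 : Filter.Tendsto (fun x : ℝ => Real.log x / x) Filter.atTop (nhds 0) :=
      Real.isLittleO_log_id_atTop.tendsto_div_nhds_zero
    have h2 := (h1.comp hLlim).mul_const ((A : ℝ) / Real.log 2)
    rw [zero_mul] at h2
    refine h2.congr' ?_
    filter_upwards [Filter.eventually_gt_atTop 0] with i hi
    have hi' : (i : ℝ) ≠ 0 := by positivity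
    have hl : Real.log 2 ≠ 0 := (Real.log_pos (by norm_num)).ne'
    simp only [Function.comp, Real.logb]
    push_cast
    field_simp
  have hgood : ∀ᶠ i : ℕ in Filter.atTop, ds i ≤ 1 / 2 ∧ 2 ≤ (i : ℝ) * (rs i - β) := by
    refine (hd.eventually_le_const (by norm_num)).and ?_
    exact (hnat.atTop_mul_pos (sub_pos.2 hβr) (hr.sub_const β)).eventually_ge_atTop 2
  let good : ℕ → Prop := fun i => ds i ≤ 1 / 2 ∧ 2 ≤ (i : ℝ) * (rs i - β)
  refine ⟨sub_pos.2 hβr,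
    fun i => if good i then rs i - β - 3 / i else rs i,
    fun i => if good i then αs i + β - 2 * (Real.logb 2 ((i * A : ℕ) : ℝ) / i) else αs i,
    fun i => if good i then κs i + 2 * β + 4 / i else κs i,
    fun i => if good i then 2 * ds i + 1 / ((i * A : ℕ) : ℝ) else ds i, ?_, ?_⟩
  · intro i hi
    obtain ⟨Mc, Kc, f, φ, hc⟩ := hcode i hi
    by_cases hg : good i
    · simp only [if_pos hg]
      exact step hWc hVc hi hβ0 hg.1 hg.2 hc
    · simp only [if_neg hg]
      exact ⟨Mc, Kc, f, φ, hc⟩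
  · simp only [nhds_prod_eq]
    refine Filter.Tendsto.prodMk ?_ (Filter.Tendsto.prodMk ?_ (Filter.Tendsto.prodMk ?_ ?_))
    · have h1 := (hr.sub_const β).sub (hinv 3)
      rw [sub_zero] at h1
      refine h1.congr' ?_
      filter_upwards [hgood] with i hi
      exact (if_pos hi).symm
    · have h1 := (hα.add_const β).sub (hlog.const_mul 2)
      rw [mul_zero, sub_zero] at h1
      refine h1.congr' ?_
      filter_upwards [hgood] with i hi
      exact (if_pos hi).symm
    · have h1 := (hκ.add_const (2 * β)).add (hinv 4)
      rw [add_zero] at h1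
      refine h1.congr' ?_
      filter_upwards [hgood] with i hi
      exact (if_pos hi).symm
    · have h1 := (hd.const_mul 2).add (hLlim.const_div_atTop 1)
      rw [mul_zero, add_zero] at h1
      refine h1.congr' ?_
      filter_upwards [hgood] with i hi
      exact (if_pos hi).symm
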